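/- For every natural number n, Σ_n = {(0,−1),(1,0),(0,1),(−1,−n)} is contained in S_n, and there exists a sequence of exactly 2^{n+2} − 4 toric blow-up steps taking Σ_n to S_n. (The surface X_n is obtained from the Hirzebruch surface F_n by exactly 2^{n+2} − 4 toric blow-ups, and this count is sharp for the construction since each toric blow-up step adds exactly one ray.) -/

import Mathlib

/-- The determinant `det(v,w) = v₁w₂ − v₂w₁` of a pair of lattice vectors. -/
def latDet (v w : ℤ × ℤ) : ℤ := v.1 * w.2 - v.2 * w.1

/-- `v, w ∈ S` form an adjacent pair of the fan with ray set `S` if `det(v,w) > 0` and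
no element of `S` lies in the open cone `{αv + βw : α > 0, β > 0, α, β ∈ ℝ}`. -/
def AdjacentPair (S : Set (ℤ × ℤ)) (v w : ℤ × ℤ) : Prop :=
  v ∈ S ∧ w ∈ S ∧ 0 < latDet v w ∧
    ∀ u ∈ S, ¬ ∃ α β : ℝ, 0 < α ∧ 0 < β ∧
      (u.1 : ℝ) = α * v.1 + β * w.1 ∧ (u.2 : ℝ) = α * v.2 + β * w.2

/-- A toric blow-up step replaces the ray set `S` by `S ∪ {v+w}` for an adjacent pair
`(v,w)` of `S`; this is the fan-level description of blowing up the torus fixed point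
corresponding to the two-dimensional cone spanned by `v` and `w`. -/
def BlowUpStep (S T : Set (ℤ × ℤ)) : Prop :=
  ∃ v w : ℤ × ℤ, AdjacentPair S v w ∧ T = S ∪ {v + w}

/-- `BlowUpSeq m S T` means `T` is obtained from `S` by a sequence of `m` toric
blow-up steps. -/
def BlowUpSeq : ℕ → Set (ℤ × ℤ) → Set (ℤ × ℤ) → Prop
  | 0, S, T => T = S
  | m + 1, S, T => ∃ R : Set (ℤ × ℤ), BlowUpSeq m S R ∧ BlowUpStep R T

/-- `Σ_n = {(0,−1),(1,0),(0,1),(−1,−n)}`, the set of ray generators of the fan of the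
Hirzebruch surface `F_n` (with `F_0 = ℂP¹ × ℂP¹`). -/
def hirzebruchFan (n : ℕ) : Set (ℤ × ℤ) :=
  {(0, -1), (1, 0), (0, 1), (-1, -(n : ℤ))}

/-- Mediant insertion: between each pair of consecutive entries insert their sum. -/
def mediantInsert : List (ℤ × ℤ) → List (ℤ × ℤ)
  | [] => []
  | [a] => [a]
  | a :: b :: t => a :: (a + b) :: mediantInsert (b :: t)

/-- The list `L_j`: `L_0 = [(1,0),(0,1)]` and `L_{j+1}` is obtained from `L_j` by
mediant insertion.  `L_j` encodes the rays of the fan of the toric surface `X_j`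
lying in the closed first quadrant, where `X_0 = ℂP¹ × ℂP¹` and `X_{j+1}` is the
blow-up of `X_j` at all of its torus fixed points. -/
def rayList : ℕ → List (ℤ × ℤ)
  | 0 => [(1, 0), (0, 1)]
  | j + 1 => mediantInsert (rayList j)

/-- The set `S_j = { (ε₁·a, ε₂·b) : (a,b) an entry of L_j, ε₁, ε₂ ∈ {1,−1} }`, the set
of primitive generators of the rays of the fan of the toric surface `X_j`. -/
def raySet (j : ℕ) : Set (ℤ × ℤ) :=
  {p | ∃ q ∈ rayList j, ∃ ε₁ ε₂ : ℤ, (ε₁ = 1 ∨ ε₁ = -1) ∧ (ε₂ = 1 ∨ ε₂ = -1) ∧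
    p = (ε₁ * q.1, ε₂ * q.2)}

/-!
Refining a cone by `j` rounds of mediant insertion takes `2 ^ j - 1` blow-ups, one for each new ray.
In `Σ_n` the first and the fourth quadrant are cones of the fan and can be refined directly. In the
left half-plane, repeatedly blowing up at `(0, 1)` and its neighbour turns `(-1, -n)` into
`(-1, -n + 1)`, ..., `(-1, 0)`. The rays `(-1, -k)` with `0 < k ≤ n` all belong to the refinement
of the third quadrant, so having `(-1, -n)` and lacking `(-1, 0)` balance out: completing the third
quadrant again takes `2 ^ n - 1` blow-ups. After that the second quadrant is a cone of the fan.
-/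

variable {S T R : Set (ℤ × ℤ)} {u v w y : ℤ × ℤ} {j k m n : ℕ}

theorem latDet_self (v : ℤ × ℤ) : latDet v v = 0 := by
  simp [latDet, mul_comm]

theorem latDet_swap (v w : ℤ × ℤ) : latDet w v = -latDet v w := by
  simp only [latDet]; ring

theorem latDet_add_left (u v w : ℤ × ℤ) : latDet (u + v) w = latDet u w + latDet v w := by
  simp only [latDet, Prod.fst_add, Prod.snd_add]; ring

theorem latDet_add_right (u v w : ℤ × ℤ) : latDet u (v + w) = latDet u v + latDet u w := by
  simp only [latDet, Prod.fst_add, Prod.snd_add]; ring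

theorem latDet_neg_left (v w : ℤ × ℤ) : latDet (-v) w = -latDet v w := by
  simp only [latDet, Prod.fst_neg, Prod.snd_neg]; ring

theorem latDet_nsmul_right (n : ℕ) (v w : ℤ × ℤ) : latDet v (n • w) = n * latDet v w := by
  simp only [latDet, Prod.smul_fst, Prod.smul_snd, Int.nsmul_eq_mul]; ring

/-- The lattice points of the open cone spanned by `v` and `w`, described by determinants so
that cones can be compared by integer arithmetic. The description is valid for `0 < latDet v w`. -/
def openCone (v w : ℤ × ℤ) : Set (ℤ × ℤ) :=
  {u | 0 < latDet v u ∧ 0 < latDet u w}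

-- The coefficients are given by Cramer's rule.
theorem mem_openCone_iff (h : 0 < latDet v w) :
    u ∈ openCone v w ↔ ∃ α β : ℝ, 0 < α ∧ 0 < β ∧
      (u.1 : ℝ) = α * v.1 + β * w.1 ∧ (u.2 : ℝ) = α * v.2 + β * w.2 := by
  have latDet_pos_iff (a b : ℤ × ℤ) : 0 < latDet a b ↔ (0 : ℝ) < a.1 * b.2 - a.2 * b.1 := by
    rw [latDet]; exact_mod_cast Iff.rfl
  simp only [openCone, Set.mem_ofPred_eq, latDet_pos_iff] at h ⊢
  constructor
  · rintro ⟨hvu, huw⟩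
    refine ⟨_, _, div_pos huw h, div_pos hvu h, ?_, ?_⟩ <;>
    · rw [div_mul_eq_mul_div, div_mul_eq_mul_div, ← add_div, eq_div_iff h.ne']
      ring
  · rintro ⟨α, β, hα, hβ, hu₁, hu₂⟩
    rw [hu₁, hu₂]
    constructor
    · linarith [mul_pos hβ h]
    · linarith [mul_pos hα h]

theorem openCone_add_right_subset (v w : ℤ × ℤ) : openCone v (v + w) ⊆ openCone v w := by
  rintro u ⟨hvu, hu⟩
  rw [latDet_add_right, latDet_swap v u] at hu
  exact ⟨hvu, by linarith⟩

theorem openCone_add_left_subset (v w : ℤ × ℤ) : openCone (v + w) w ⊆ openCone v w := by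
  rintro u ⟨hu, huw⟩
  rw [latDet_add_left, latDet_swap u w] at hu
  exact ⟨by linarith, huw⟩

theorem openCone_neg_subset_add_nsmul (n : ℕ) (w y : ℤ × ℤ) :
    openCone (-y) w ⊆ openCone (-y) (w + n • y) := by
  rintro u ⟨hyu, huw⟩
  have huy : 0 < latDet u y := by rwa [latDet_neg_left, ← latDet_swap] at hyu
  refine ⟨hyu, ?_⟩
  rw [latDet_add_right, latDet_nsmul_right]
  positivity

theorem left_notMem_openCone (v w : ℤ × ℤ) : v ∉ openCone v w :=
  fun h ↦ h.1.ne' (latDet_self v)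

theorem right_notMem_openCone (v w : ℤ × ℤ) : w ∉ openCone v w :=
  fun h ↦ h.2.ne' (latDet_self w)

theorem disjoint_openCone_openCone (u v w : ℤ × ℤ) :
    Disjoint (openCone u v) (openCone v w) := by
  refine Set.disjoint_left.2 fun x hx hx' ↦ ?_
  have := hx'.1
  rw [latDet_swap x v] at this
  linarith [hx.2]

theorem disjoint_openCone_neg (u v w : ℤ × ℤ) :
    Disjoint (openCone v u) (openCone (-v) w) := by
  refine Set.disjoint_left.2 fun x hx hx' ↦ ?_
  have := hx'.1
  rw [latDet_neg_left] at this
  linarith [hx.1]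

/-- The rays strictly between `v` and `w` produced by `j` rounds of mediant insertion into
`[v, w]`, as in the Stern–Brocot tree. -/
def mediants {M : Type*} [Add M] : ℕ → M → M → Set M
  | 0, _, _ => ∅
  | j + 1, v, w => {v + w} ∪ mediants j v (v + w) ∪ mediants j (v + w) w

theorem mediants_comm {M : Type*} [AddCommMagma M] (j : ℕ) (v w : M) :
    mediants j v w = mediants j w v := by
  induction j generalizing v w with
  | zero => rfl
  | succ j ih =>
    rw [mediants, mediants, ih v (v + w), ih (v + w) w, add_comm w v, Set.union_right_comm]

theorem image_mediants {M N F : Type*} [Add M] [Add N] [FunLike F M N] [AddHomClass F M N]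
    (f : F) (j : ℕ) (v w : M) : f '' mediants j v w = mediants j (f v) (f w) := by
  induction j generalizing v w with
  | zero => exact Set.image_empty f
  | succ j ih =>
    simp only [mediants, Set.image_union, Set.image_singleton, ih, map_add]

theorem add_nsmul_mem_insert_mediants {M : Type*} [AddMonoid M] (n : ℕ) (v w : M) :
    v + n • w ∈ insert v (mediants n v w) := by
  induction n generalizing v with
  | zero => simp
  | succ n ih =>
    rw [succ_nsmul', ← add_assoc]
    refine Or.inr ?_
    rcases ih (v + w) with h | h
    · exact Or.inl (Or.inl h)
    · exact Or.inr h

theorem mediants_subset_openCone (h : 0 < latDet v w) : mediants j v w ⊆ openCone v w := by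
  induction j generalizing v w with
  | zero => exact Set.empty_subset _
  | succ j ih =>
    have hleft : 0 < latDet v (v + w) := by rwa [latDet_add_right, latDet_self, zero_add]
    have hright : 0 < latDet (v + w) w := by rwa [latDet_add_left, latDet_self, add_zero]
    refine Set.union_subset (Set.union_subset ?_ ?_) ?_
    · exact Set.singleton_subset_iff.2 ⟨hleft, hright⟩
    · exact (ih hleft).trans (openCone_add_right_subset v w)
    · exact (ih hright).trans (openCone_add_left_subset v w)

theorem mem_iterate_mediantInsert (j : ℕ) (a b : ℤ × ℤ) (t : List (ℤ × ℤ)) :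
    u ∈ mediantInsert^[j] (a :: b :: t) ↔
      u = a ∨ u ∈ mediants j a b ∨ u ∈ mediantInsert^[j] (b :: t) := by
  induction j generalizing a b t with
  | zero => simp [mediants]
  | succ j ih =>
    obtain ⟨s, hs⟩ : ∃ s, mediantInsert (b :: t) = b :: s := by
      cases t <;> exact ⟨_, rfl⟩
    simp only [Function.iterate_succ_apply, mediantInsert, hs, ih, mediants, Set.mem_union,
      Set.mem_singleton_iff]
    tauto

theorem rayList_eq_iterate (n : ℕ) : rayList n = mediantInsert^[n] [(1, 0), (0, 1)] := by
  induction n with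
  | zero => rfl
  | succ n ih => rw [rayList, ih, Function.iterate_succ_apply']

theorem mem_rayList_iff :
    u ∈ rayList n ↔ u = (1, 0) ∨ u ∈ mediants n (1, 0) (0, 1) ∨ u = (0, 1) := by
  rw [rayList_eq_iterate, mem_iterate_mediantInsert, Function.iterate_fixed rfl,
    List.mem_singleton]

theorem mem_mediants_axes_iff (ε₁ ε₂ : ℤ) :
    u ∈ mediants n (ε₁, 0) (0, ε₂) ↔
      ∃ q ∈ mediants n (1, 0) (0, 1), u = (ε₁ * q.1, ε₂ * q.2) := by
  have himage := image_mediants (AddMonoidHom.mulLeft ((ε₁, ε₂) : ℤ × ℤ)) n (1, 0) (0, 1)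
  simp only [AddMonoidHom.coe_mulLeft, Prod.mk_mul_mk, mul_one, mul_zero] at himage
  simp only [← himage, Set.mem_image, Prod.mul_def, eq_comm]

theorem mem_raySet_iff :
    u ∈ raySet n ↔ ∃ ε₁ ε₂ : ℤ, (ε₁ = 1 ∨ ε₁ = -1) ∧ (ε₂ = 1 ∨ ε₂ = -1) ∧
      (u = (ε₁, 0) ∨ u ∈ mediants n (ε₁, 0) (0, ε₂) ∨ u = (0, ε₂)) := by
  simp only [raySet, mem_rayList_iff, Set.mem_ofPred_eq]
  constructor
  · rintro ⟨q, hq, ε₁, ε₂, h₁, h₂, rfl⟩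
    refine ⟨ε₁, ε₂, h₁, h₂, ?_⟩
    rcases hq with rfl | hq | rfl
    · simp
    · exact .inr (.inl ((mem_mediants_axes_iff ε₁ ε₂).2 ⟨q, hq, rfl⟩))
    · simp
  · rintro ⟨ε₁, ε₂, h₁, h₂, rfl | hu | rfl⟩
    · exact ⟨(1, 0), .inl rfl, ε₁, ε₂, h₁, h₂, by simp⟩
    · obtain ⟨q, hq, rfl⟩ := (mem_mediants_axes_iff ε₁ ε₂).1 hu
      exact ⟨q, .inr (.inl hq), ε₁, ε₂, h₁, h₂, rfl⟩
    · exact ⟨(0, 1), .inr (.inr rfl), ε₁, ε₂, h₁, h₂, by simp⟩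

theorem raySet_eq_union (n : ℕ) :
    raySet n = hirzebruchFan n ∪ mediants n (1, 0) (0, 1) ∪ mediants n (0, -1) (1, 0) ∪
      insert (-1, 0) (mediants n (-1, 0) (0, -1)) ∪ mediants n (0, 1) (-1, 0) := by
  have hray : ((-1, -n) : ℤ × ℤ) ∈ insert (-1, 0) (mediants n (-1, 0) (0, -1)) := by
    simpa using add_nsmul_mem_insert_mediants n ((-1, 0) : ℤ × ℤ) (0, -1)
  rw [mediants_comm n (0, 1), mediants_comm n (0, -1)]
  ext u
  simp only [mem_raySet_iff, hirzebruchFan, Set.mem_union, Set.mem_insert_iff,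
    Set.mem_singleton_iff] at hray ⊢
  grind

namespace BlowUpSeq

theorem trans (hSR : BlowUpSeq k S R) (hRT : BlowUpSeq m R T) : BlowUpSeq (k + m) S T := by
  induction m generalizing T with
  | zero => cases hRT; exact hSR
  | succ m ih =>
    obtain ⟨Q, hRQ, hQT⟩ := hRT
    exact ⟨Q, ih hRQ, hQT⟩

theorem subset (h : BlowUpSeq m S T) : S ⊆ T := by
  induction m generalizing T with
  | zero => exact h.ge
  | succ m ih =>
    obtain ⟨Q, hSQ, v, w, -, rfl⟩ := h
    exact (ih hSQ).trans Set.subset_union_left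

end BlowUpSeq

theorem adjacentPair_iff :
    AdjacentPair S v w ↔ v ∈ S ∧ w ∈ S ∧ 0 < latDet v w ∧ Disjoint S (openCone v w) := by
  refine and_congr_right fun _ ↦ and_congr_right fun _ ↦ and_congr_right fun h ↦ ?_
  simp only [Set.disjoint_left, mem_openCone_iff h]

namespace AdjacentPair

theorem latDet_pos (h : AdjacentPair S v w) : 0 < latDet v w :=
  h.2.2.1

theorem disjoint_openCone (h : AdjacentPair S v w) : Disjoint S (openCone v w) :=
  (adjacentPair_iff.1 h).2.2.2

theorem union (h : AdjacentPair S v w) (hT : Disjoint T (openCone v w)) :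
    AdjacentPair (S ∪ T) v w :=
  adjacentPair_iff.2 ⟨.inl h.1, .inl h.2.1, h.latDet_pos, h.disjoint_openCone.union_left hT⟩

theorem union_mediants_left (h : AdjacentPair S v w) (hu : 0 < latDet u v) (j : ℕ) :
    AdjacentPair (S ∪ mediants j u v) v w :=
  h.union ((disjoint_openCone_openCone u v w).mono_left (mediants_subset_openCone hu))

theorem union_mediants_right (h : AdjacentPair S v w) (hu : 0 < latDet w u) (j : ℕ) :
    AdjacentPair (S ∪ mediants j w u) v w :=
  h.union ((disjoint_openCone_openCone v w u).symm.mono_left (mediants_subset_openCone hu))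

theorem union_mediants_neg (h : AdjacentPair S (-v) w) (hu : 0 < latDet v u) (j : ℕ) :
    AdjacentPair (S ∪ mediants j v u) (-v) w :=
  h.union ((disjoint_openCone_neg u v w).mono_left (mediants_subset_openCone hu))

theorem blowUp_left (h : AdjacentPair S v w) : AdjacentPair (S ∪ {v + w}) v (v + w) := by
  refine adjacentPair_iff.2 ⟨.inl h.1, .inr rfl, ?_, Set.disjoint_union_left.2 ⟨?_, ?_⟩⟩
  · simpa only [latDet_add_right, latDet_self, zero_add] using h.latDet_pos
  · exact h.disjoint_openCone.mono_right (openCone_add_right_subset v w)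
  · exact Set.disjoint_singleton_left.2 (right_notMem_openCone _ _)

theorem blowUp_right (h : AdjacentPair S v w) : AdjacentPair (S ∪ {v + w}) (v + w) w := by
  refine adjacentPair_iff.2 ⟨.inr rfl, .inl h.2.1, ?_, Set.disjoint_union_left.2 ⟨?_, ?_⟩⟩
  · simpa only [latDet_add_left, latDet_self, add_zero] using h.latDet_pos
  · exact h.disjoint_openCone.mono_right (openCone_add_left_subset v w)
  · exact Set.disjoint_singleton_left.2 (left_notMem_openCone _ _)

theorem union_insert_mediants_neg (h : AdjacentPair S (-y) (w + n • y)) :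
    AdjacentPair (S ∪ insert w (mediants n w y)) (-y) w := by
  have hwy : 0 < latDet w y := by
    simpa only [latDet_add_right, latDet_nsmul_right, latDet_neg_left, latDet_self, neg_zero,
      mul_zero, add_zero, ← latDet_swap] using h.latDet_pos
  refine adjacentPair_iff.2 ⟨.inl h.1, .inr (.inl rfl), ?_, Set.disjoint_union_left.2 ⟨?_, ?_⟩⟩
  · rwa [latDet_neg_left, ← latDet_swap]
  · exact h.disjoint_openCone.mono_right (openCone_neg_subset_add_nsmul n w y)
  · exact Set.disjoint_insert_left.2 ⟨right_notMem_openCone _ _,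
      (disjoint_openCone_openCone (-y) w y).symm.mono_left (mediants_subset_openCone hwy)⟩

theorem blowUpSeq_one (h : AdjacentPair S v w) : BlowUpSeq 1 S (S ∪ {v + w}) :=
  ⟨S, rfl, v, w, h, rfl⟩

theorem blowUpSeq_mediants (h : AdjacentPair S v w) (j : ℕ) :
    BlowUpSeq (2 ^ j - 1) S (S ∪ mediants j v w) := by
  induction j generalizing S v w with
  | zero => exact Set.union_empty S
  | succ j ih =>
    have hleft := h.blowUp_left
    have hright := h.blowUp_right.union_mediants_left hleft.latDet_pos j
    convert (h.blowUpSeq_one.trans (ih hleft)).trans (ih hright) using 1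
    · have := Nat.one_le_two_pow (n := j)
      omega
    · simp only [mediants, Set.union_assoc]

-- Blowing up `(-y, w + (k + 1) • y)` gives the ray `w + k • y`, so `w` is reached from `w + n • y`
-- by walking towards `-y`; these rays are part of the refinement of the cone `(w, y)`.
theorem blowUpSeq_insert_mediants_neg (h : AdjacentPair S (-y) (w + n • y)) :
    BlowUpSeq (2 ^ n - 1) S (S ∪ insert w (mediants n w y)) := by
  induction n generalizing w with
  | zero =>
    have hw : w ∈ S := by simpa using h.2.1
    simpa [mediants, BlowUpSeq] using hw
  | succ n ih =>
    rw [succ_nsmul', ← add_assoc] at h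
    have hcone := h.union_insert_mediants_neg
    have hw : -y + (w + y) = w := by abel
    convert ((ih h).trans hcone.blowUpSeq_one).trans (hcone.blowUp_right.blowUpSeq_mediants n)
      using 1
    · have := Nat.one_le_two_pow (n := n)
      omega
    · rw [hw]
      ext u
      simp only [mediants, Set.mem_union, Set.mem_insert_iff, Set.mem_singleton_iff]
      tauto

end AdjacentPair

theorem adjacentPair_hirzebruchFan_firstQuadrant (n : ℕ) :
    AdjacentPair (hirzebruchFan n) (1, 0) (0, 1) := by
  simp [adjacentPair_iff, hirzebruchFan, openCone, latDet]

theorem adjacentPair_hirzebruchFan_fourthQuadrant (n : ℕ) :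
    AdjacentPair (hirzebruchFan n) (0, -1) (1, 0) := by
  simp [adjacentPair_iff, hirzebruchFan, openCone, latDet]

theorem adjacentPair_hirzebruchFan_left (n : ℕ) :
    AdjacentPair (hirzebruchFan n) (-(0, -1)) ((-1, 0) + n • (0, -1)) := by
  simp [adjacentPair_iff, hirzebruchFan, openCone, latDet]

/-- For every natural number `n`, `Σ_n ⊆ S_n`, and there is a sequence
of exactly `2^{n+2} − 4` toric blow-up steps taking `Σ_n` to `S_n`: the surface `X_n`
is obtained from the Hirzebruch surface `F_n` by exactly `2^{n+2} − 4` toric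
blow-ups. -/
theorem hirzebruchFan_to_raySet (n : ℕ) :
    hirzebruchFan n ⊆ raySet n ∧ BlowUpSeq (2 ^ (n + 2) - 4) (hirzebruchFan n) (raySet n) := by
  have hfirst := adjacentPair_hirzebruchFan_firstQuadrant n
  have hfourth := (adjacentPair_hirzebruchFan_fourthQuadrant n).union_mediants_right
    hfirst.latDet_pos n
  have hleft := ((adjacentPair_hirzebruchFan_left n).union_mediants_left
    hfirst.latDet_pos n).union_mediants_neg hfourth.latDet_pos n
  have hsecond := hleft.union_insert_mediants_neg
  have hseq : BlowUpSeq (2 ^ (n + 2) - 4) (hirzebruchFan n) (raySet n) := by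
    convert (((hfirst.blowUpSeq_mediants n).trans (hfourth.blowUpSeq_mediants n)).trans
      hleft.blowUpSeq_insert_mediants_neg).trans (hsecond.blowUpSeq_mediants n) using 1
    · have := Nat.one_le_two_pow (n := n)
      rw [pow_add]
      omega
    · exact raySet_eq_union n
  exact ⟨hseq.subset, hseq⟩
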